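/- Let G be a plane graph and C₁,...,C_m a concentric sequence of cycles in G. If there exist indices i, j ∈ [m] with |i − j| ≥ t + 1 such that μ_G(C_i, C_j) ≥ t (there are t vertex-disjoint paths between C_i and C_j), then the treewidth of G is at least t. -/

import Mathlib

open SimpleGraph

variable {V : Type}

/-- A drawing of the graph `G` in the plane (identified with `ℂ`): vertices are distinct
points and each edge is a simple curve between its endpoints; distinct edges meet only at
common endpoints, and the interior of an edge avoids all vertex points. -/
structure PlaneEmb (G : SimpleGraph V) where
  pos : V → ℂ
  pos_inj : Function.Injective pos
  curve : (u v : V) → G.Adj u v → ℝ → ℂ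
  curve_cont : ∀ u v h, ContinuousOn (curve u v h) (Set.Icc 0 1)
  curve_zero : ∀ u v h, curve u v h 0 = pos u
  curve_one : ∀ u v h, curve u v h 1 = pos v
  curve_injOn : ∀ u v h, Set.InjOn (curve u v h) (Set.Icc 0 1)
  curve_symm : ∀ u v (h : G.Adj u v) (t : ℝ), curve v u h.symm t = curve u v h (1 - t)
  curve_avoid : ∀ u v (h : G.Adj u v), ∀ t ∈ Set.Ioo (0:ℝ) 1, ∀ w, curve u v h t ≠ pos w
  curve_disjoint : ∀ u v (h : G.Adj u v), ∀ u' v' (h' : G.Adj u' v'), s(u, v) ≠ s(u', v') →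
    ∀ t ∈ Set.Ioo (0:ℝ) 1, ∀ t' ∈ Set.Ioo (0:ℝ) 1, curve u v h t ≠ curve u' v' h' t'

namespace PlaneEmb

variable {G : SimpleGraph V}

/-- The subset of the plane covered by the drawing of `G`. -/
def image (emb : PlaneEmb G) : Set ℂ :=
  Set.range emb.pos ∪ ⋃ (u : V) (v : V) (h : G.Adj u v), emb.curve u v h '' Set.Icc 0 1

/-- The subset of the plane covered by the drawing of a walk. -/
def walkImage (emb : PlaneEmb G) {u v : V} (p : G.Walk u v) : Set ℂ :=
  {emb.pos u} ∪ ⋃ d ∈ p.darts, emb.curve d.toProd.1 d.toProd.2 d.adj '' Set.Icc 0 1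

end PlaneEmb

/-- The disc of a subset `S` of the plane:  `S` together with all bounded connected
components of its complement. -/
def discOf (S : Set ℂ) : Set ℂ :=
  S ∪ {z | z ∉ S ∧ Bornology.IsBounded (connectedComponentIn Sᶜ z)}

/-- There are `n` pairwise vertex-disjoint `(X,Y)`-paths in `G`. -/
def DisjointPathFamily (G : SimpleGraph V) (X Y : Set V) (n : ℕ) : Prop :=
  ∃ (s t : Fin n → V) (P : ∀ i, G.Walk (s i) (t i)),
    (∀ i, s i ∈ X) ∧ (∀ i, t i ∈ Y) ∧ (∀ i, (P i).IsPath) ∧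
      ∀ i j, i ≠ j → ∀ x, x ∈ (P i).support → x ∉ (P j).support

/-- A tree decomposition of `G`: a tree of bags covering all vertices and edges, in which
the bags containing any fixed vertex form a connected subtree (expressed by requiring the
vertex to appear in every bag along any path between two bags containing it). -/
structure TreeDecomp (G : SimpleGraph V) where
  ι : Type
  T : SimpleGraph ι
  tree : T.IsTree
  bag : ι → Finset V
  mem_bag : ∀ v : V, ∃ i, v ∈ bag i
  edge_bag : ∀ u v : V, G.Adj u v → ∃ i, u ∈ bag i ∧ v ∈ bag i
  path_bag : ∀ (v : V) (i j : ι), v ∈ bag i → v ∈ bag j →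
    ∀ p : T.Walk i j, p.IsPath → ∀ x ∈ p.support, v ∈ bag x

/-! A compact set with continuous logarithms has no bounded complementary component: otherwise the
logarithm of `z - q`, for `q` in such a component, would extend to a large circle around `q`. Arcs
have continuous logarithms, and this pins a cycle to the boundary of its disc. A disc with an
interior point on its bounding cycle would survive the deletion of a short piece of the cycle, yet
the arc that is left bounds nothing. Hence, in a concentric sequence, every walk from `C i` to
`C j` meets all the cycles between them.

Let `i < j`, say. The cycles `C (i + k)` for `k < t` and the `t` disjoint paths, truncated just
before they reach `C j`, cross each other pairwise. The unions of one path and one cycle, together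
with `C j` itself, form a bramble. By the Helly property of subtrees some bag of a tree
decomposition meets every member of the bramble, so it meets `C j` and either all the paths or all
the cycles, which are `t` further disjoint sets. -/

open Set Bornology

section ContinuousLogarithms

variable {X Y : Type*} [TopologicalSpace X] [TopologicalSpace Y]

/-- Every nowhere vanishing complex function on `A` has a continuous logarithm. For compact subsets
of the plane this is the Eilenberg–Borsuk criterion for having a connected complement. As with
`ContinuousOn`, the functions are total and only their values on `A` matter. -/
def HasContinuousLogOn (A : Set X) : Prop :=
  ∀ f : X → ℂ, ContinuousOn f A → (∀ z ∈ A, f z ≠ 0) →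
    ∃ g : X → ℂ, ContinuousOn g A ∧ ∀ z ∈ A, Complex.exp (g z) = f z

theorem exists_continuous_exp_eq [SimplyConnectedSpace X] [LocallyPathConnectedSpace X]
    {f : X → ℂ} (hf : Continuous f) (hf₀ : ∀ x, f x ≠ 0) :
    ∃ g : X → ℂ, Continuous g ∧ ∀ x, Complex.exp (g x) = f x := by
  obtain ⟨x₀⟩ : Nonempty X := inferInstance
  obtain ⟨g, ⟨-, hg⟩, -⟩ := Complex.isCoveringMapOn_exp.existsUnique_continuousMap_lifts
    (⟨f, hf⟩ : C(X, ℂ)) (Complex.exp_log (hf₀ x₀)) fun x => hf₀ x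
  exact ⟨g, g.continuous, congrFun hg⟩

theorem eq_of_exp_comp_eq [PreconnectedSpace X] {f g : X → ℂ} (hf : Continuous f)
    (hg : Continuous g) (h : ∀ x, Complex.exp (f x) = Complex.exp (g x)) {x₀ : X}
    (h₀ : f x₀ = g x₀) : f = g :=
  Complex.isCoveringMap_exp.eq_of_comp_eq hf hg (funext fun x => Subtype.ext (h x)) x₀ h₀

/-- The argument of `z - q` grows by `2π` along the circle. -/
theorem not_exists_continuousOn_exp_eq_sub (q : ℂ) {r : ℝ} (hr : 0 < r) :
    ¬ ∃ g : ℂ → ℂ, ContinuousOn g (Metric.sphere q r) ∧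
      ∀ z ∈ Metric.sphere q r, Complex.exp (g z) = z - q := by
  rintro ⟨g, hg, hexp⟩
  have hmem (x : ℝ) : circleMap q r x ∈ Metric.sphere q r := circleMap_mem_sphere q hr.le x
  have hlift : (fun x : ℝ => g (circleMap q r x)) =
      fun x : ℝ => g (circleMap q r 0) + x * Complex.I := by
    refine eq_of_exp_comp_eq (hg.comp_continuous (continuous_circleMap q r) hmem) (by fun_prop)
      (fun x => ?_) (x₀ := 0) (by simp)
    rw [Complex.exp_add, hexp _ (hmem x), hexp _ (hmem 0)]
    simp [circleMap]
  have hperiod : circleMap q r (2 * Real.pi) = circleMap q r 0 := by simp [circleMap]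
  simpa [hperiod, Real.pi_ne_zero] using congrFun hlift (2 * Real.pi)

namespace HasContinuousLogOn

theorem singleton (x : X) : HasContinuousLogOn {x} := fun f _ hf₀ =>
  ⟨fun _ => Complex.log (f x), continuousOn_const, fun _ hz => by
    rw [mem_singleton_iff.1 hz, Complex.exp_log (hf₀ x rfl)]⟩

theorem union {A B : Set X} (hA : HasContinuousLogOn A) (hB : HasContinuousLogOn B)
    (hAc : IsClosed A) (hBc : IsClosed B) (hAB : (A ∩ B).Subsingleton) :
    HasContinuousLogOn (A ∪ B) := by
  classical
  intro f hf hf₀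
  obtain ⟨a, ha, haf⟩ := hA f (hf.mono subset_union_left) fun z hz => hf₀ z (.inl hz)
  obtain ⟨b, hb, hbf⟩ := hB f (hf.mono subset_union_right) fun z hz => hf₀ z (.inr hz)
  obtain ⟨c, hc, hcab⟩ : ∃ c, Complex.exp c = 1 ∧ ∀ z ∈ A ∩ B, a z = b z + c := by
    rcases hAB.eq_empty_or_singleton with h | ⟨x, hx⟩
    · exact ⟨0, Complex.exp_zero, by simp [h]⟩
    · have hxAB : x ∈ A ∩ B := hx ▸ rfl
      refine ⟨a x - b x, ?_, fun z hz => ?_⟩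
      · rw [Complex.exp_sub, haf x hxAB.1, hbf x hxAB.2, div_self (hf₀ x (.inl hxAB.1))]
      · rw [hAB hz hxAB, add_sub_cancel]
  have hbc : EqOn (A.piecewise a fun z => b z + c) (fun z => b z + c) B := fun z hz => by
    by_cases hzA : z ∈ A
    · rw [piecewise_eq_of_mem _ _ _ hzA, hcab z ⟨hzA, hz⟩]
    · rw [piecewise_eq_of_notMem _ _ _ hzA]
  refine ⟨A.piecewise a fun z => b z + c, ?_, ?_⟩
  · exact (ha.congr (piecewise_eqOn A _ _)).union_of_isClosed
      ((hb.add continuousOn_const).congr hbc) hAc hBc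
  · rintro z (hz | hz)
    · rw [piecewise_eq_of_mem _ _ _ hz, haf z hz]
    · rw [hbc hz, Complex.exp_add, hc, mul_one, hbf z hz]

theorem image_of_injOn [T2Space Y] {K : Set X} (hK : HasContinuousLogOn K) (hKc : IsCompact K)
    {γ : X → Y} (hγ : ContinuousOn γ K) (hinj : InjOn γ K) : HasContinuousLogOn (γ '' K) := by
  intro f hf hf₀
  obtain ⟨g, hg, hgf⟩ := hK (f ∘ γ) (hf.comp hγ (mapsTo_image γ K))
    fun x hx => hf₀ _ (mem_image_of_mem γ hx)
  have : CompactSpace K := isCompact_iff_compactSpace.1 hKc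
  have hemb : Topology.IsEmbedding (K.domRestrict γ) :=
    ((continuousOn_iff_continuous_domRestrict.1 hγ).isClosedEmbedding hinj.injective).isEmbedding
  obtain ⟨G, hG⟩ : ∃ G : Y → ℂ, ∀ x ∈ K, G (γ x) = g x := by
    rcases isEmpty_or_nonempty X with h | h
    · exact ⟨0, fun x => isEmptyElim x⟩
    · exact ⟨g ∘ Function.invFunOn γ K, fun x hx =>
        congrArg g (hinj.leftInvOn_invFunOn hx)⟩
  refine ⟨G, ?_, ?_⟩
  · rw [← range_domRestrict, ← image_univ, hemb.isInducing.continuousOn_image_iff,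
      continuousOn_univ]
    exact (continuousOn_iff_continuous_domRestrict.1 hg).congr fun x => (hG x x.2).symm
  · rintro _ ⟨x, hx, rfl⟩
    rw [hG x hx, hgf x hx, Function.comp_apply]

theorem Icc (a b : ℝ) : HasContinuousLogOn (Icc a b) := by
  intro f hf hf₀
  rcases le_or_gt a b with hab | hab
  · obtain ⟨g, hg, hgf⟩ := exists_continuous_exp_eq
      (continuousOn_iff_continuous_domRestrict.1 hf |>.comp (continuous_projIcc (h := hab)))
      fun x => hf₀ _ (projIcc a b hab x).2
    exact ⟨g, hg.continuousOn, fun x hx => by simp [hgf, projIcc_of_mem hab hx]⟩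
  · exact ⟨0, continuousOn_const, by simp [Icc_eq_empty hab.not_ge]⟩

end HasContinuousLogOn

end ContinuousLogarithms

section Discs

variable {S T A K P : Set ℂ} {z w : ℂ}

theorem subset_discOf : S ⊆ discOf S := subset_union_left

theorem mem_discOf_iff_of_notMem (hz : z ∉ S) :
    z ∈ discOf S ↔ IsBounded (connectedComponentIn Sᶜ z) := by
  simp [discOf, hz]

theorem mem_discOf_iff_of_mem_connectedComponentIn (hw : w ∈ connectedComponentIn Sᶜ z) :
    w ∈ discOf S ↔ z ∈ discOf S := by
  have hz : z ∉ S := connectedComponentIn_nonempty_iff.1 ⟨w, hw⟩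
  rw [mem_discOf_iff_of_notMem hz, connectedComponentIn_eq hw,
    mem_discOf_iff_of_notMem (connectedComponentIn_subset _ _ hw)]

theorem inter_nonempty_of_mem_discOf (hP : IsPreconnected P) (hzP : z ∈ P) (hz : z ∈ discOf S)
    (hwP : w ∈ P) (hw : w ∉ discOf S) : (P ∩ S).Nonempty := by
  by_contra h
  have hPS : P ⊆ Sᶜ := fun x hxP hxS => h ⟨x, hxP, hxS⟩
  exact hw ((mem_discOf_iff_of_mem_connectedComponentIn
    (hP.subset_connectedComponentIn hzP hPS hwP)).2 hz)

theorem discOf_diff_subset_interior (hS : IsClosed S) : discOf S \ S ⊆ interior (discOf S) :=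
  fun _ hz => mem_interior.2 ⟨_, fun _ hw => (mem_discOf_iff_of_mem_connectedComponentIn hw).2 hz.1,
    hS.isOpen_compl.connectedComponentIn, mem_connectedComponentIn hz.2⟩

theorem isClosed_discOf (hS : IsClosed S) : IsClosed (discOf S) := by
  refine isOpen_compl_iff.1 (isOpen_iff_mem_nhds.2 fun z hz => ?_)
  have hzS : z ∉ S := fun h => hz (subset_discOf h)
  filter_upwards [hS.isOpen_compl.connectedComponentIn.mem_nhds (mem_connectedComponentIn hzS)]
    with w hw
  rwa [mem_compl_iff, mem_discOf_iff_of_mem_connectedComponentIn hw]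

/-- A point outside a ball containing `S` escapes to infinity along its radial ray. -/
theorem isBounded_discOf (hS : IsBounded S) : IsBounded (discOf S) := by
  obtain ⟨R, hR, hSR⟩ := hS.exists_pos_norm_le
  refine isBounded_iff_forall_norm_le.2 ⟨R, fun z hz => ?_⟩
  by_contra! hzR
  have hzS : z ∉ S := fun h => (hSR z h).not_gt hzR
  have hray : (fun s : ℝ => s • z) '' Ici 1 ⊆ connectedComponentIn Sᶜ z := by
    refine (isPreconnected_Ici.image _ (by fun_prop)).subset_connectedComponentIn
      ⟨1, self_mem_Ici, one_smul ℝ z⟩ ?_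
    rintro _ ⟨s, hs, rfl⟩ hsS
    have hsz : ‖s • z‖ = s * ‖z‖ := norm_smul_of_nonneg (zero_le_one.trans hs) z
    nlinarith [hSR _ hsS, mem_Ici.1 hs]
  obtain ⟨M, hM, hbound⟩ :=
    (((mem_discOf_iff_of_notMem hzS).1 hz).subset hray).exists_pos_norm_le
  have hz₀ : 0 < ‖z‖ := hR.trans hzR
  have hM' : 1 + M / ‖z‖ ∈ Ici (1 : ℝ) := le_add_of_nonneg_right (div_nonneg hM.le hz₀.le)
  have hfar := hbound _ (mem_image_of_mem _ hM')
  rw [norm_smul_of_nonneg (by positivity), add_mul, div_mul_cancel₀ _ hz₀.ne'] at hfar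
  linarith

/-- A component of the complement of `S` that leaves `discOf T` contains an unbounded component of
the complement of `T`. -/
theorem discOf_subset_interior_discOf (hS : IsClosed S) (hST : S ⊆ interior (discOf T)) :
    discOf S ⊆ interior (discOf T) := by
  intro z hz
  by_contra hzT
  have hzS : z ∉ S := fun h => hzT (hST h)
  have hclosure : z ∈ closure (discOf T)ᶜ := by rwa [closure_compl]
  obtain ⟨w, hwz, hwT⟩ := mem_closure_iff.1 hclosure _ hS.isOpen_compl.connectedComponentIn
    (mem_connectedComponentIn hzS)
  have hwT' : w ∉ T := fun h => hwT (subset_discOf h)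
  have hcomp : connectedComponentIn Tᶜ w ⊆ Sᶜ := fun x hx hxS =>
    hwT ((mem_discOf_iff_of_mem_connectedComponentIn hx).1 (interior_subset (hST hxS)))
  refine hwT ((mem_discOf_iff_of_notMem hwT').2 (((mem_discOf_iff_of_notMem hzS).1 hz).subset ?_))
  rw [connectedComponentIn_eq hwz]
  exact isPreconnected_connectedComponentIn.subset_connectedComponentIn
    (mem_connectedComponentIn hwT') hcomp

theorem discOf_subset_interior_discOf_of_lt {m : ℕ} {S : Fin m → Set ℂ}
    (hS : ∀ j, IsClosed (S j))
    (hsucc : ∀ j : Fin m, ∀ h : (j : ℕ) + 1 < m, S j ⊆ interior (discOf (S ⟨j + 1, h⟩)))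
    {a b : Fin m} (hab : a < b) : discOf (S a) ⊆ interior (discOf (S b)) := by
  have hstep (j : Fin m) (h : (j : ℕ) + 1 < m) :
      discOf (S j) ⊆ interior (discOf (S ⟨j + 1, h⟩)) :=
    discOf_subset_interior_discOf (hS j) (hsucc j h)
  obtain ⟨b, hb⟩ := b
  induction b, (show (a : ℕ) + 1 ≤ b from hab) using Nat.le_induction with
  | base => exact hstep a hb
  | succ b hle ih =>
    exact ((ih (by omega) hle).trans interior_subset).trans (hstep ⟨b, by omega⟩ hb)

theorem interior_discOf_subset_discOf (hK : IsCompact K)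
    (hKA : K \ A ⊆ interior (discOf K)) : interior (discOf K) ⊆ discOf A := by
  intro z hz
  by_contra hzA
  have hzA' : z ∉ A := fun h => hzA (subset_discOf h)
  have hcover : connectedComponentIn Aᶜ z ⊆ interior (discOf K) ∪ (discOf K)ᶜ := by
    intro w hw
    by_cases hwK : w ∈ K
    · exact .inl (hKA ⟨hwK, connectedComponentIn_subset _ _ hw⟩)
    · exact (em (w ∈ discOf K)).imp_left fun h => discOf_diff_subset_interior hK.isClosed ⟨h, hwK⟩
  have hsub : connectedComponentIn Aᶜ z ⊆ interior (discOf K) :=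
    isPreconnected_connectedComponentIn.subset_left_of_subset_union isOpen_interior
      (isClosed_discOf hK.isClosed).isOpen_compl
      (disjoint_compl_right.mono_left interior_subset) hcover
      ⟨z, mem_connectedComponentIn hzA', hz⟩
  exact hzA ((mem_discOf_iff_of_notMem hzA').2
    ((isBounded_discOf hK.isBounded).subset (hsub.trans interior_subset)))

theorem frontier_connectedComponentIn_subset {X : Type*} [TopologicalSpace X]
    [LocallyConnectedSpace X] {U : Set X} (hU : IsOpen U) (x : X) :
    frontier (connectedComponentIn U x) ⊆ Uᶜ := by
  rintro y hy hyU
  obtain ⟨w, hwy, hwx⟩ :=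
    mem_closure_iff.1 hy.1 _ hU.connectedComponentIn (mem_connectedComponentIn hyU)
  have hyx : y ∈ connectedComponentIn U x := by
    rw [connectedComponentIn_eq hwx, ← connectedComponentIn_eq hwy]
    exact mem_connectedComponentIn hyU
  exact hy.2 (by rwa [hU.connectedComponentIn.interior_eq])

/-- If `q` lay in a bounded component `U` of the complement of `A`, a logarithm of `z - q` on `A`
would yield a nowhere vanishing function on `ℂ` equal to `z - q` outside `U`, and hence a logarithm
of `z - q` on a large circle. -/
theorem discOf_eq_self_of_hasContinuousLogOn (hA : IsClosed A) (hlog : HasContinuousLogOn A) :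
    discOf A = A := by
  classical
  refine subset_discOf.antisymm' fun q hq => ?_
  by_contra hqA
  set U := connectedComponentIn Aᶜ q
  have hfrontier : frontier U ⊆ A := by
    simpa using frontier_connectedComponentIn_subset hA.isOpen_compl q
  obtain ⟨g, hg, hgexp⟩ := hlog (fun z => z - q) (by fun_prop)
    fun z hz => sub_ne_zero.2 fun h => hqA (h ▸ hz)
  obtain ⟨G, hG⟩ := ContinuousMap.exists_restrict_eq hA
    ⟨A.domRestrict g, continuousOn_iff_continuous_domRestrict.1 hg⟩
  have hGexp (z : ℂ) (hz : z ∈ A) : Complex.exp (G z) = z - q := by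
    rw [← hgexp z hz, show G z = g z from DFunLike.congr_fun hG ⟨z, hz⟩]
  obtain ⟨k, hk, hkexp⟩ := exists_continuous_exp_eq
    (f := U.piecewise (fun z => Complex.exp (G z)) fun z => z - q)
    (Continuous.piecewise (fun z hz => hGexp z (hfrontier hz)) (by fun_prop) (by fun_prop))
    (fun z => by
      by_cases hz : z ∈ U
      · simp [hz]
      · simpa [hz, sub_eq_zero] using fun h : z = q => hz (h ▸ mem_connectedComponentIn hqA))
  obtain ⟨r, hr, hball⟩ := ((mem_discOf_iff_of_notMem hqA).1 hq).subset_ball_lt 0 q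
  refine not_exists_continuousOn_exp_eq_sub q hr ⟨k, hk.continuousOn, fun z hz => ?_⟩
  have hzU : z ∉ U := fun h => (Metric.mem_ball.1 (hball h)).ne hz
  rw [hkexp, piecewise_eq_of_notMem _ _ _ hzU]

end Discs

section Arcs

theorem exists_Ioo_mapsTo_of_continuousOn_Icc {X : Type*} [TopologicalSpace X] {γ : ℝ → X}
    {a b s : ℝ} {U : Set X} (hab : a < b) (hγ : ContinuousOn γ (Icc a b)) (hs : s ∈ Icc a b)
    (hU : IsOpen U) (hsU : γ s ∈ U) :
    ∃ α β, a ≤ α ∧ α < β ∧ β ≤ b ∧ MapsTo γ (Ioo α β) U := by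
  obtain ⟨O, hO, hOU⟩ := continuousOn_iff'.1 hγ U hU
  have hsO : s ∈ O := (hOU.subset ⟨hsU, hs⟩).1
  have hs' : s ∈ closure (Ioo a b) := by rwa [closure_Ioo hab.ne]
  obtain ⟨τ, hτO, hτ⟩ := mem_closure_iff.1 hs' O hO hsO
  obtain ⟨α, β, hαβ, hsub⟩ := (hO.inter isOpen_Ioo).exists_Ioo_subset ⟨τ, hτO, hτ⟩
  have hIoo : Ioo α β ⊆ Ioo a b := hsub.trans inter_subset_right
  obtain ⟨haα, hβb⟩ := (Ioo_subset_Ioo_iff hαβ).1 hIoo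
  exact ⟨α, β, haα, hαβ, hβb, fun x hx =>
    (hOU.superset ⟨(hsub hx).1, Ioo_subset_Icc_self (hIoo hx)⟩).1⟩

end Arcs

section Drawings

namespace PlaneEmb

variable {G : SimpleGraph V} (emb : PlaneEmb G) {u v u' v' w : V}

theorem curve_image_Icc (h : G.Adj u v) :
    emb.curve u v h '' Icc 0 1 =
      insert (emb.pos u) (insert (emb.pos v) (emb.curve u v h '' Ioo 0 1)) := by
  rw [← Ioc_insert_left zero_le_one, ← Ioo_insert_right zero_lt_one, image_insert_eq,
    image_insert_eq, emb.curve_zero, emb.curve_one]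

theorem walkImage_cons (h : G.Adj u v) (p : G.Walk v w) :
    emb.walkImage (.cons h p) = emb.curve u v h '' Icc 0 1 ∪ emb.walkImage p := by
  have hu : emb.pos u ∈ emb.curve u v h '' Icc 0 1 := by simp [curve_image_Icc]
  have hv : emb.pos v ∈ emb.curve u v h '' Icc 0 1 := by simp [curve_image_Icc]
  ext z
  simp only [walkImage, Walk.darts_cons, List.mem_cons, iUnion_iUnion_eq_or_left, mem_union,
    mem_singleton_iff]
  grind

theorem walkImage_eq_pos_image_union (p : G.Walk u v) :
    emb.walkImage p = emb.pos '' {w | w ∈ p.support} ∪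
      ⋃ d ∈ p.darts, emb.curve d.fst d.snd d.adj '' Ioo 0 1 := by
  induction p with
  | nil => simp [walkImage]
  | cons h p ih =>
    have hv := p.start_mem_support
    ext z
    simp only [walkImage_cons, ih, curve_image_Icc, Walk.support_cons, Walk.darts_cons,
      List.mem_cons, iUnion_iUnion_eq_or_left, mem_union, mem_insert_iff, mem_image, mem_ofPred_eq]
    grind

theorem mem_walkImage_iff (p : G.Walk u v) {z : ℂ} :
    z ∈ emb.walkImage p ↔ (∃ w ∈ p.support, emb.pos w = z) ∨
      ∃ d ∈ p.darts, ∃ s ∈ Ioo (0 : ℝ) 1, emb.curve d.fst d.snd d.adj s = z := by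
  simp [walkImage_eq_pos_image_union]

theorem pos_mem_walkImage_iff (p : G.Walk u v) :
    emb.pos w ∈ emb.walkImage p ↔ w ∈ p.support := by
  refine (emb.mem_walkImage_iff p).trans ⟨?_, fun hw => .inl ⟨w, hw, rfl⟩⟩
  rintro (⟨x, hx, hxw⟩ | ⟨d, -, s, hs, hsw⟩)
  · rwa [← emb.pos_inj hxw]
  · exact absurd hsw (emb.curve_avoid _ _ d.adj s hs w)

theorem mem_edges_of_curve_mem_walkImage (p : G.Walk u' v') (h : G.Adj u v) {s : ℝ}
    (hs : s ∈ Ioo (0 : ℝ) 1) (hsp : emb.curve u v h s ∈ emb.walkImage p) : s(u, v) ∈ p.edges := by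
  by_contra he
  rcases (emb.mem_walkImage_iff p).1 hsp with ⟨w, -, hw⟩ | ⟨d, hd, τ, hτ, hτs⟩
  · exact emb.curve_avoid u v h s hs w hw.symm
  · have hne : s(d.fst, d.snd) ≠ s(u, v) := fun hduv => he (hduv ▸ List.mem_map_of_mem hd)
    exact emb.curve_disjoint _ _ d.adj u v h hne τ hτ s hs hτs

theorem exists_mem_support_of_walkImage_inter_nonempty (p : G.Walk u v) (q : G.Walk u' v')
    (hpq : (emb.walkImage p ∩ emb.walkImage q).Nonempty) : ∃ w ∈ p.support, w ∈ q.support := by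
  obtain ⟨z, hzp, hzq⟩ := hpq
  rcases (emb.mem_walkImage_iff p).1 hzp with ⟨w, hw, rfl⟩ | ⟨d, hd, s, hs, rfl⟩
  · exact ⟨w, hw, (emb.pos_mem_walkImage_iff q).1 hzq⟩
  · exact ⟨d.fst, p.dart_fst_mem_support_of_mem_darts hd,
      q.fst_mem_support_of_mem_edges (emb.mem_edges_of_curve_mem_walkImage q d.adj hs hzq)⟩

theorem eq_zero_or_eq_one_of_curve_mem_walkImage (p : G.Walk u' v') (h : G.Adj u v)
    (he : s(u, v) ∉ p.edges) {s : ℝ} (hs : s ∈ Icc (0 : ℝ) 1)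
    (hsp : emb.curve u v h s ∈ emb.walkImage p) :
    s = 0 ∧ u ∈ p.support ∨ s = 1 ∧ v ∈ p.support := by
  rcases eq_endpoints_or_mem_Ioo_of_mem_Icc hs with rfl | rfl | hs'
  · exact .inl ⟨rfl, by rwa [curve_zero, pos_mem_walkImage_iff] at hsp⟩
  · exact .inr ⟨rfl, by rwa [curve_one, pos_mem_walkImage_iff] at hsp⟩
  · exact absurd (emb.mem_edges_of_curve_mem_walkImage p h hs' hsp) he

theorem isCompact_walkImage (p : G.Walk u v) : IsCompact (emb.walkImage p) := by
  induction p with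
  | nil => simp [walkImage]
  | cons h p ih =>
    rw [walkImage_cons]
    exact (isCompact_Icc.image_of_continuousOn (emb.curve_cont _ _ h)).union ih

theorem isPreconnected_walkImage (p : G.Walk u v) : IsPreconnected (emb.walkImage p) := by
  induction p with
  | nil => simp [walkImage, isPreconnected_singleton]
  | @cons u v w h p ih =>
    rw [walkImage_cons]
    exact (isPreconnected_Icc.image _ (emb.curve_cont u v h)).union (emb.pos v)
      (by simp [curve_image_Icc]) ((emb.pos_mem_walkImage_iff p).2 p.start_mem_support) ih

theorem isClosed_curve_image_Icc (h : G.Adj u v) {a b : ℝ} (ha : 0 ≤ a) (hb : b ≤ 1) :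
    IsClosed (emb.curve u v h '' Icc a b) :=
  (isCompact_Icc.image_of_continuousOn
    ((emb.curve_cont u v h).mono (Icc_subset_Icc ha hb))).isClosed

theorem hasContinuousLogOn_curve_image_Icc (h : G.Adj u v) {a b : ℝ} (ha : 0 ≤ a) (hb : b ≤ 1) :
    HasContinuousLogOn (emb.curve u v h '' Icc a b) :=
  (HasContinuousLogOn.Icc a b).image_of_injOn isCompact_Icc
    ((emb.curve_cont u v h).mono (Icc_subset_Icc ha hb))
    ((emb.curve_injOn u v h).mono (Icc_subset_Icc ha hb))

theorem hasContinuousLogOn_walkImage {p : G.Walk u v} (hp : p.IsPath) :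
    HasContinuousLogOn (emb.walkImage p) := by
  induction p with
  | nil => simpa [walkImage] using HasContinuousLogOn.singleton _
  | @cons u v w h p ih =>
    obtain ⟨hp, hu⟩ := (Walk.cons_isPath_iff h p).1 hp
    rw [walkImage_cons]
    refine (emb.hasContinuousLogOn_curve_image_Icc h le_rfl le_rfl).union (ih hp)
      (emb.isClosed_curve_image_Icc h le_rfl le_rfl) (emb.isCompact_walkImage p).isClosed
      (subsingleton_of_subset_singleton (a := emb.pos v) ?_)
    rintro _ ⟨⟨s, hs, rfl⟩, hsp⟩
    have he : s(u, v) ∉ p.edges := fun he => hu (p.fst_mem_support_of_mem_edges he)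
    rcases emb.eq_zero_or_eq_one_of_curve_mem_walkImage p h he hs hsp with ⟨-, hup⟩ | ⟨rfl, -⟩
    · exact absurd hup hu
    · exact emb.curve_one u v h

/-- The drawing of the closed walk `cons h p` with the open arc of parameters in `(α, β)` removed
from the edge `h`. Cutting a cycle in this way leaves an arc, which does not separate the plane. -/
def cutImage (h : G.Adj u v) (p : G.Walk v u) (α β : ℝ) : Set ℂ :=
  emb.walkImage p ∪ emb.curve u v h '' Icc 0 α ∪ emb.curve u v h '' Icc β 1

theorem isClosed_cutImage (h : G.Adj u v) (p : G.Walk v u) {α β : ℝ} (hα : α ≤ 1) (hβ : 0 ≤ β) :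
    IsClosed (emb.cutImage h p α β) :=
  ((emb.isCompact_walkImage p).isClosed.union (emb.isClosed_curve_image_Icc h le_rfl hα)).union
    (emb.isClosed_curve_image_Icc h hβ le_rfl)

theorem walkImage_cons_diff_cutImage_subset (h : G.Adj u v) (p : G.Walk v u) (α β : ℝ) :
    emb.walkImage (.cons h p) \ emb.cutImage h p α β ⊆ emb.curve u v h '' Ioo α β := by
  rw [walkImage_cons]
  rintro _ ⟨⟨s, hs, rfl⟩ | hz, hcut⟩
  · simp only [cutImage, mem_union, not_or] at hcut
    refine ⟨s, ⟨?_, ?_⟩, rfl⟩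
    · by_contra! hsα
      exact hcut.1.2 ⟨s, ⟨hs.1, hsα⟩, rfl⟩
    · by_contra! hsβ
      exact hcut.2 ⟨s, ⟨hsβ, hs.2⟩, rfl⟩
  · exact absurd (.inl (.inl hz)) hcut

theorem curve_notMem_cutImage (h : G.Adj u v) {p : G.Walk v u} (he : s(u, v) ∉ p.edges)
    {α β τ : ℝ} (hα : 0 ≤ α) (hβ : β ≤ 1) (hτ : τ ∈ Ioo α β) :
    emb.curve u v h τ ∉ emb.cutImage h p α β := by
  have hτ' : τ ∈ Ioo (0 : ℝ) 1 := Ioo_subset_Ioo hα hβ hτ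
  have hinj : InjOn (emb.curve u v h) (Icc 0 1) := emb.curve_injOn u v h
  rintro ((hp | ⟨s, hs, hsτ⟩) | ⟨s, hs, hsτ⟩)
  · exact he (emb.mem_edges_of_curve_mem_walkImage p h hτ' hp)
  · have := hinj ⟨hs.1, by grind⟩ (Ioo_subset_Icc_self hτ') hsτ
    grind
  · have := hinj ⟨by grind, hs.2⟩ (Ioo_subset_Icc_self hτ') hsτ
    grind

theorem hasContinuousLogOn_cutImage (h : G.Adj u v) {p : G.Walk v u} (hp : p.IsPath)
    (he : s(u, v) ∉ p.edges) {α β : ℝ} (hα : 0 ≤ α) (hαβ : α < β) (hβ : β ≤ 1) :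
    HasContinuousLogOn (emb.cutImage h p α β) := by
  have hα' : α < 1 := hαβ.trans_le hβ
  have hβ' : 0 < β := hα.trans_lt hαβ
  have hpc : IsClosed (emb.walkImage p) := (emb.isCompact_walkImage p).isClosed
  have hleft : emb.walkImage p ∩ emb.curve u v h '' Icc 0 α ⊆ {emb.pos u} := by
    rintro _ ⟨hz, s, hs, rfl⟩
    rcases emb.eq_zero_or_eq_one_of_curve_mem_walkImage p h he ⟨hs.1, hs.2.trans hα'.le⟩ hz
      with ⟨rfl, -⟩ | ⟨rfl, -⟩
    · exact emb.curve_zero u v h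
    · exact absurd hs.2 hα'.not_ge
  have hright : (emb.walkImage p ∪ emb.curve u v h '' Icc 0 α) ∩ emb.curve u v h '' Icc β 1 ⊆
      {emb.pos v} := by
    rintro _ ⟨hz | ⟨s', hs', hss'⟩, s, hs, rfl⟩
    · rcases emb.eq_zero_or_eq_one_of_curve_mem_walkImage p h he ⟨hβ'.le.trans hs.1, hs.2⟩ hz
        with ⟨rfl, -⟩ | ⟨rfl, -⟩
      · exact absurd hs.1 hβ'.not_ge
      · exact emb.curve_one u v h
    · have := emb.curve_injOn u v h ⟨hs'.1, hs'.2.trans hα'.le⟩ ⟨hβ'.le.trans hs.1, hs.2⟩ hss'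
      exact absurd (hs.1.trans (this ▸ hs'.2)) hαβ.not_ge
  exact ((emb.hasContinuousLogOn_walkImage hp).union
    (emb.hasContinuousLogOn_curve_image_Icc h le_rfl hα'.le) hpc
    (emb.isClosed_curve_image_Icc h le_rfl hα'.le) (subsingleton_of_subset_singleton hleft)).union
    (emb.hasContinuousLogOn_curve_image_Icc h hβ'.le le_rfl)
    (hpc.union (emb.isClosed_curve_image_Icc h le_rfl hα'.le))
    (emb.isClosed_curve_image_Icc h hβ'.le le_rfl) (subsingleton_of_subset_singleton hright)

/-- If a point of the edge were interior to the disc, then so would be an open arc of the edge.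
Cutting it out of the cycle leaves an arc that contains the whole interior of the disc. -/
theorem curve_notMem_interior_discOf (h : G.Adj u v) {p : G.Walk v u} (hp : p.IsPath)
    (he : s(u, v) ∉ p.edges) {s : ℝ} (hs : s ∈ Icc (0 : ℝ) 1) :
    emb.curve u v h s ∉ interior (discOf (emb.walkImage (.cons h p))) := by
  intro hmem
  obtain ⟨α, β, hα, hαβ, hβ, hmaps⟩ := exists_Ioo_mapsTo_of_continuousOn_Icc zero_lt_one
    (emb.curve_cont u v h) hs isOpen_interior hmem
  have hsub : interior (discOf (emb.walkImage (.cons h p))) ⊆ emb.cutImage h p α β := by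
    rw [← discOf_eq_self_of_hasContinuousLogOn
      (emb.isClosed_cutImage h p (hαβ.le.trans hβ) (hα.trans hαβ.le))
      (emb.hasContinuousLogOn_cutImage h hp he hα hαβ hβ)]
    exact interior_discOf_subset_discOf (emb.isCompact_walkImage _)
      ((emb.walkImage_cons_diff_cutImage_subset h p α β).trans hmaps.image_subset)
  obtain ⟨τ, hτ⟩ := exists_between hαβ
  exact emb.curve_notMem_cutImage h he hα hβ hτ (hsub (hmaps hτ))

theorem walkImage_rotate [DecidableEq V] (c : G.Walk v v) (hu : u ∈ c.support) :
    emb.walkImage (c.rotate u hu) = emb.walkImage c := by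
  have hdarts (d : G.Dart) : d ∈ (c.rotate u hu).darts ↔ d ∈ c.darts :=
    (c.rotate_darts u hu).mem_iff
  simp only [walkImage_eq_pos_image_union, Walk.mem_support_rotate_iff, hdarts]

theorem walkImage_eq_iUnion_curve_image_Icc {p : G.Walk u v} (hp : ¬ p.Nil) :
    emb.walkImage p = ⋃ d ∈ p.darts, emb.curve d.fst d.snd d.adj '' Icc 0 1 := by
  cases p with
  | nil => simp at hp
  | cons h p =>
    refine union_eq_right.2 (singleton_subset_iff.2 ?_)
    simp [curve_image_Icc]

end PlaneEmb

theorem exists_rotate_eq_cons_of_mem_darts [DecidableEq V] {G : SimpleGraph V} {u : V}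
    {c : G.Walk u u} (hc : c.IsCycle) {d : G.Dart} (hd : d ∈ c.darts) :
    ∃ p, c.rotate d.fst (c.dart_fst_mem_support_of_mem_darts hd) = .cons d.adj p := by
  set hu := c.dart_fst_mem_support_of_mem_darts hd
  have hc' : (c.rotate d.fst hu).IsCycle := hc.rotate hu
  have hd' : d ∈ (c.rotate d.fst hu).darts := (c.rotate_darts d.fst hu).mem_iff.2 hd
  generalize c.rotate d.fst hu = c' at hc' hd'
  cases c' with
  | nil => simp at hd'
  | cons h p =>
    rcases List.mem_cons.1 (Walk.darts_cons h p ▸ hd') with hdh | hdp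
    · obtain rfl := congrArg (fun e : G.Dart => e.snd) hdh
      exact ⟨p, rfl⟩
    · have hnodup := ((Walk.cons_isCycle_iff p h).1 hc').1.support_nodup
      rw [← Walk.map_fst_darts_append, List.nodup_append] at hnodup
      exact (hnodup.2.2 d.fst (List.mem_map_of_mem hdp) d.fst (by simp) rfl).elim

namespace PlaneEmb

variable {G : SimpleGraph V} (emb : PlaneEmb G) {u v w : V}

theorem disjoint_walkImage_interior_discOf {c : G.Walk u u} (hc : c.IsCycle) :
    Disjoint (emb.walkImage c) (interior (discOf (emb.walkImage c))) := by
  classical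
  rw [Set.disjoint_left]
  intro z hz
  simp only [emb.walkImage_eq_iUnion_curve_image_Icc hc.not_nil, mem_iUnion] at hz
  obtain ⟨d, hd, s, hs, rfl⟩ := hz
  have hu := c.dart_fst_mem_support_of_mem_darts hd
  obtain ⟨p, hp⟩ := exists_rotate_eq_cons_of_mem_darts hc hd
  have hcycle := (Walk.cons_isCycle_iff p d.adj).1 (hp ▸ hc.rotate hu)
  rw [← emb.walkImage_rotate c hu, hp]
  exact emb.curve_notMem_interior_discOf d.adj hcycle.1 hcycle.2 hs

theorem exists_mem_support_of_mem_discOf (p : G.Walk u v) (c : G.Walk w w)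
    (hu : emb.pos u ∈ discOf (emb.walkImage c)) (hv : emb.pos v ∉ discOf (emb.walkImage c)) :
    ∃ x ∈ p.support, x ∈ c.support :=
  emb.exists_mem_support_of_walkImage_inter_nonempty p c <|
    inter_nonempty_of_mem_discOf (emb.isPreconnected_walkImage p)
      ((emb.pos_mem_walkImage_iff p).2 p.start_mem_support) hu
      ((emb.pos_mem_walkImage_iff p).2 p.end_mem_support) hv

end PlaneEmb

end Drawings

section Trees

variable {ι : Type*} {T : SimpleGraph ι} {x y : ι} {A B C : Set ι}

theorem preconnected_induce_iff_exists_walk :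
    (T.induce A).Preconnected ↔
      ∀ x ∈ A, ∀ y ∈ A, ∃ p : T.Walk x y, ∀ z ∈ p.support, z ∈ A := by
  constructor
  · intro hA x hx y hy
    obtain ⟨p⟩ := hA ⟨x, hx⟩ ⟨y, hy⟩
    refine ⟨p.map (Embedding.induce A).toHom, fun z hz => ?_⟩
    obtain ⟨z', -, rfl⟩ := List.mem_map.1 (Walk.support_map _ p ▸ hz)
    exact z'.2
  · rintro hA ⟨x, hx⟩ ⟨y, hy⟩
    obtain ⟨p, hp⟩ := hA x hx y hy
    exact ⟨p.induce A hp⟩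

theorem support_subset_and_edges_subset_of_isPath (hT : T.IsAcyclic) {p : T.Walk x y}
    (hp : p.IsPath) (q : T.Walk x y) : p.support ⊆ q.support ∧ p.edges ⊆ q.edges := by
  classical
  have hpq : (⟨p, hp⟩ : T.Path x y) = q.toPath := (hT.subsingleton_path x y).elim _ _
  obtain rfl : p = q.bypass := congrArg Subtype.val hpq
  exact ⟨q.support_bypass_subset_support, q.edges_bypass_subset_edges⟩

theorem mem_of_mem_support_of_isPath (hT : T.IsAcyclic) (hA : (T.induce A).Preconnected)
    (hx : x ∈ A) (hy : y ∈ A) {p : T.Walk x y} (hp : p.IsPath) {z : ι} (hz : z ∈ p.support) :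
    z ∈ A := by
  obtain ⟨q, hq⟩ := preconnected_induce_iff_exists_walk.1 hA x hx y hy
  exact hq z ((support_subset_and_edges_subset_of_isPath hT hp q).1 hz)

theorem preconnected_induce_inter (hT : T.IsAcyclic) (hA : (T.induce A).Preconnected)
    (hB : (T.induce B).Preconnected) : (T.induce (A ∩ B)).Preconnected := by
  classical
  refine preconnected_induce_iff_exists_walk.2 fun x hx y hy => ?_
  obtain ⟨q, -⟩ := preconnected_induce_iff_exists_walk.1 hA x hx.1 y hy.1
  have hp : q.bypass.IsPath := q.bypass_isPath
  exact ⟨q.bypass, fun z hz => ⟨mem_of_mem_support_of_isPath hT hA hx.1 hy.1 hp hz,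
    mem_of_mem_support_of_isPath hT hB hx.2 hy.2 hp hz⟩⟩

/-- The path inside `C` from `B` to `A` leaves `B` along an edge. A walk through `B` and then `A`
with the same ends must use this edge. It cannot do so within `B`, so the edge starts in `A`. -/
theorem inter_inter_nonempty_of_isAcyclic (hT : T.IsAcyclic) (hA : (T.induce A).Preconnected)
    (hB : (T.induce B).Preconnected) (hC : (T.induce C).Preconnected) (hAB : (A ∩ B).Nonempty)
    (hAC : (A ∩ C).Nonempty) (hBC : (B ∩ C).Nonempty) : (A ∩ (B ∩ C)).Nonempty := by
  classical
  obtain ⟨c, hcA, hcB⟩ := hAB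
  obtain ⟨b, hbA, hbC⟩ := hAC
  obtain ⟨a, haB, haC⟩ := hBC
  by_cases hbB : b ∈ B
  · exact ⟨b, hbA, hbB, hbC⟩
  obtain ⟨p', -⟩ := preconnected_induce_iff_exists_walk.1 hC a haC b hbC
  set p := p'.bypass
  have hp : p.IsPath := p'.bypass_isPath
  obtain ⟨q, hq⟩ := preconnected_induce_iff_exists_walk.1 hB a haB c hcB
  obtain ⟨r, hr⟩ := preconnected_induce_iff_exists_walk.1 hA c hcA b hbA
  obtain ⟨d, hd, hdB, hdB'⟩ := p.exists_boundary_dart B haB hbB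
  have hdp : d.edge ∈ (q.append r).edges :=
    (support_subset_and_edges_subset_of_isPath hT hp (q.append r)).2 (List.mem_map_of_mem hd)
  rw [Walk.edges_append, List.mem_append] at hdp
  refine ⟨d.fst, ?_, hdB, mem_of_mem_support_of_isPath hT hC haC hbC hp
    (p.dart_fst_mem_support_of_mem_darts hd)⟩
  rcases hdp with hdq | hdr
  · exact absurd (hq _ (q.snd_mem_support_of_mem_edges hdq)) hdB'
  · exact hr _ (r.fst_mem_support_of_mem_edges hdr)

theorem exists_forall_mem_of_pairwise_inter_nonempty {κ : Type*} (hT : T.IsAcyclic)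
    {s : Finset κ} (hs : s.Nonempty) {F : κ → Set ι} (hF : ∀ k, (T.induce (F k)).Preconnected)
    (hFF : ∀ k l, (F k ∩ F l).Nonempty) : ∃ x, ∀ k ∈ s, x ∈ F k := by
  induction hs using Finset.Nonempty.cons_induction generalizing F with
  | singleton a => simpa [Set.Nonempty] using hFF a a
  | cons a s _ hs ih =>
    have hmeet (k l : κ) : (F a ∩ F k ∩ (F a ∩ F l)).Nonempty := by
      rw [← inter_inter_distrib_left]
      exact inter_inter_nonempty_of_isAcyclic hT (hF a) (hF k) (hF l) (hFF a k) (hFF a l)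
        (hFF k l)
    obtain ⟨x, hx⟩ := ih (fun k => preconnected_induce_inter hT (hF a) (hF k)) hmeet
    obtain ⟨k, hk⟩ := hs
    exact ⟨x, Finset.forall_mem_cons _ _ |>.2 ⟨(hx k hk).1, fun l hl => (hx l hl).2⟩⟩

end Trees

section Brambles

/-- A bramble, as a family of sets of vertices: its members are connected and pairwise touching,
that is, they share a vertex or are joined by an edge. Taking `k = l` in the touching condition,
all members are nonempty. -/
structure IsBramble {V κ : Type*} (G : SimpleGraph V) (B : κ → Set V) : Prop where
  preconnected : ∀ k, (G.induce (B k)).Preconnected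
  touch : ∀ k l, ∃ u ∈ B k, ∃ v ∈ B l, u = v ∨ G.Adj u v

namespace TreeDecomp

variable {G : SimpleGraph V} (D : TreeDecomp G)

/-- The nodes of the decomposition tree whose bags meet the set `B` of vertices: the subtree
representing `B` when `B` is connected. -/
def nodesMeeting (B : Set V) : Set D.ι :=
  {x | ∃ v ∈ B, v ∈ D.bag x}

theorem exists_walk_of_mem_bag {x y : D.ι} {v : V} (hx : v ∈ D.bag x) (hy : v ∈ D.bag y) :
    ∃ p : D.T.Walk x y, ∀ z ∈ p.support, v ∈ D.bag z := by
  obtain ⟨p, hp⟩ := D.tree.connected.exists_isPath x y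
  exact ⟨p, D.path_bag v x y hx hy p hp⟩

theorem preconnected_induce_nodesMeeting {B : Set V} (hB : (G.induce B).Preconnected) :
    (D.T.induce (D.nodesMeeting B)).Preconnected := by
  refine preconnected_induce_iff_exists_walk.2 ?_
  rintro x ⟨u, hu, hux⟩ y ⟨v, hv, hvy⟩
  obtain ⟨p, hp⟩ := preconnected_induce_iff_exists_walk.1 hB u hu v hv
  clear hu hv
  induction p generalizing x with
  | @nil u =>
    obtain ⟨q, hq⟩ := D.exists_walk_of_mem_bag hux hvy
    exact ⟨q, fun z hz => ⟨u, hp u (by simp), hq z hz⟩⟩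
  | @cons u w v h p ih =>
    obtain ⟨n, hun, hwn⟩ := D.edge_bag u w h
    obtain ⟨q, hq⟩ := D.exists_walk_of_mem_bag hux hun
    obtain ⟨r, hr⟩ := ih n hwn hvy fun z hz => hp z (List.mem_cons_of_mem u hz)
    refine ⟨q.append r, fun z hz => ?_⟩
    rcases (Walk.mem_support_append_iff q r).1 hz with hz | hz
    · exact ⟨u, hp u (by simp), hq z hz⟩
    · exact hr z hz

theorem exists_bag_inter_nonempty {κ : Type*} [Finite κ] {B : κ → Set V} (hB : IsBramble G B) :
    ∃ x, ∀ k, (B k ∩ D.bag x).Nonempty := by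
  have := Fintype.ofFinite κ
  rcases isEmpty_or_nonempty κ with _ | _
  · exact D.tree.connected.nonempty.elim fun x => ⟨x, isEmptyElim⟩
  have hmeet (k l : κ) : (D.nodesMeeting (B k) ∩ D.nodesMeeting (B l)).Nonempty := by
    obtain ⟨u, hu, v, hv, rfl | huv⟩ := hB.touch k l
    · obtain ⟨x, hx⟩ := D.mem_bag u
      exact ⟨x, ⟨u, hu, hx⟩, ⟨u, hv, hx⟩⟩
    · obtain ⟨x, hux, hvx⟩ := D.edge_bag u v huv
      exact ⟨x, ⟨u, hu, hux⟩, ⟨v, hv, hvx⟩⟩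
  obtain ⟨x, hx⟩ := exists_forall_mem_of_pairwise_inter_nonempty D.tree.isAcyclic
    Finset.univ_nonempty (fun k => D.preconnected_induce_nodesMeeting (hB.preconnected k)) hmeet
  exact ⟨x, fun k => hx k (Finset.mem_univ k)⟩

end TreeDecomp

theorem card_le_card_of_pairwise_disjoint {α κ : Type*} [Fintype κ] {b : Finset α}
    {F : κ → Set α} (hF : Pairwise (Function.onFun Disjoint F))
    (hb : ∀ k, (F k ∩ b).Nonempty) : Fintype.card κ ≤ b.card := by
  choose f hfF hfb using hb
  have hinj : f.Injective := fun k l hkl => by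
    by_contra hne
    exact Set.disjoint_left.1 (hF hne) (hfF k) (hkl ▸ hfF l)
  exact Finset.card_le_card_of_injOn f (fun k _ => hfb k) hinj.injOn

theorem card_add_one_le_card_of_pairwise_disjoint {α κ : Type*} [Fintype κ] {b : Finset α}
    {F : κ → Set α} {Y : Set α} (hF : Pairwise (Function.onFun Disjoint F))
    (hFY : ∀ k, Disjoint (F k) Y) (hb : ∀ k, (F k ∩ b).Nonempty) (hY : (Y ∩ b).Nonempty) :
    Fintype.card κ + 1 ≤ b.card := by
  rw [← Fintype.card_option]
  refine card_le_card_of_pairwise_disjoint (F := fun o => o.elim Y F) ?_ ?_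
  · rintro (_ | k) (_ | l) hkl
    · exact absurd rfl hkl
    · exact (hFY l).symm
    · exact hFY k
    · exact hF (fun h => hkl (congrArg some h))
  · rintro (_ | k)
    exacts [hY, hb k]

section Grids

variable {G : SimpleGraph V} {α β : Type*} {P : α → Set V} {K : β → Set V} {Y : Set V}

theorem isBramble_option_elim_union (hP : ∀ a, (G.induce (P a)).Preconnected)
    (hK : ∀ b, (G.induce (K b)).Preconnected) (hY : (G.induce Y).Preconnected)
    (hYne : Y.Nonempty) (hPK : ∀ a b, (P a ∩ K b).Nonempty)
    (hPY : ∀ a, ∃ u ∈ P a, ∃ v ∈ Y, G.Adj u v) :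
    IsBramble G fun o : Option (α × β) => o.elim Y fun x => P x.1 ∪ K x.2 := by
  constructor
  · rintro (_ | ⟨a, b⟩)
    · exact hY
    · exact (induce_union_connected (hP a) (hK b) (hPK a b)).preconnected
  · rintro (_ | ⟨a, b⟩) (_ | ⟨a', b'⟩)
    · exact ⟨hYne.some, hYne.some_mem, hYne.some, hYne.some_mem, .inl rfl⟩
    · obtain ⟨u, hu, v, hv, huv⟩ := hPY a'
      exact ⟨v, hv, u, .inl hu, .inr huv.symm⟩
    · obtain ⟨u, hu, v, hv, huv⟩ := hPY a
      exact ⟨u, .inl hu, v, hv, .inr huv⟩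
    · obtain ⟨z, hzP, hzK⟩ := hPK a b'
      exact ⟨z, .inl hzP, z, .inr hzK, .inl rfl⟩

theorem TreeDecomp.exists_min_card_add_one_le_card_bag [Fintype α] [Fintype β]
    (D : TreeDecomp G) (hP : ∀ a, (G.induce (P a)).Preconnected)
    (hK : ∀ b, (G.induce (K b)).Preconnected) (hY : (G.induce Y).Preconnected)
    (hYne : Y.Nonempty) (hPP : Pairwise (Function.onFun Disjoint P))
    (hKK : Pairwise (Function.onFun Disjoint K)) (hPdisj : ∀ a, Disjoint (P a) Y)
    (hKdisj : ∀ b, Disjoint (K b) Y) (hPK : ∀ a b, (P a ∩ K b).Nonempty)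
    (hPY : ∀ a, ∃ u ∈ P a, ∃ v ∈ Y, G.Adj u v) :
    ∃ x, min (Fintype.card α) (Fintype.card β) + 1 ≤ (D.bag x).card := by
  obtain ⟨x, hx⟩ :=
    D.exists_bag_inter_nonempty (isBramble_option_elim_union hP hK hY hYne hPK hPY)
  refine ⟨x, ?_⟩
  have hxY : (Y ∩ D.bag x).Nonempty := hx none
  have hxPK (a : α) (b : β) : ((P a ∪ K b) ∩ D.bag x).Nonempty := hx (some (a, b))
  by_cases hall : ∀ a, (P a ∩ D.bag x).Nonempty
  · exact (Nat.add_le_add_right (min_le_left _ _) 1).trans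
      (card_add_one_le_card_of_pairwise_disjoint hPP hPdisj hall hxY)
  · obtain ⟨a, ha⟩ := not_forall.1 hall
    have hall' (b : β) : (K b ∩ D.bag x).Nonempty := by
      have := hxPK a b
      rw [union_inter_distrib_right, union_nonempty] at this
      exact this.resolve_left ha
    exact (Nat.add_le_add_right (min_le_right _ _) 1).trans
      (card_add_one_le_card_of_pairwise_disjoint hKK hKdisj hall' hxY)

end Grids

end Brambles

section Concentric

theorem exists_walk_adj_of_mem {V : Type*} {G : SimpleGraph V} {u v : V} (p : G.Walk u v)
    {Y : Set V} (hu : u ∉ Y) (hv : v ∈ Y) :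
    ∃ (x y : V) (q : G.Walk u x),
      (∀ z ∈ q.support, z ∈ p.support ∧ z ∉ Y) ∧ y ∈ Y ∧ G.Adj x y := by
  induction p with
  | nil => exact absurd hv hu
  | @cons u w v h p ih =>
    by_cases hw : w ∈ Y
    · exact ⟨u, w, .nil, by simp [hu], hw, h⟩
    · obtain ⟨x, y, q, hq, hy, hxy⟩ := ih hw hv
      refine ⟨x, y, .cons h q, ?_, hy, hxy⟩
      rw [Walk.support_cons, Walk.support_cons, List.forall_mem_cons]
      exact ⟨⟨List.mem_cons_self, hu⟩,
        fun z hz => ⟨List.mem_cons_of_mem u (hq z hz).1, (hq z hz).2⟩⟩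

variable {G : SimpleGraph V}

theorem DisjointPathFamily.symm {X Y : Set V} {n : ℕ} (h : DisjointPathFamily G X Y n) :
    DisjointPathFamily G Y X n := by
  obtain ⟨s, e, P, hs, he, hP, hPP⟩ := h
  exact ⟨e, s, fun k => (P k).reverse, he, hs, fun k => (hP k).reverse, by simpa using hPP⟩

theorem TreeDecomp.exists_add_one_le_card_bag (D : TreeDecomp G) {n : ℕ} {X Y : Set V}
    {K : Fin n → Set V} (hXY : DisjointPathFamily G X Y n)
    (hK : ∀ k, (G.induce (K k)).Preconnected) (hY : (G.induce Y).Preconnected)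
    (hYne : Y.Nonempty) (hKK : Pairwise (Function.onFun Disjoint K))
    (hKY : ∀ k, Disjoint (K k) Y)
    (hmeet : ∀ k, ∀ u ∈ X, ∀ v ∈ Y, ∀ p : G.Walk u v, ∃ z ∈ p.support, z ∈ K k) :
    ∃ x, n + 1 ≤ (D.bag x).card := by
  obtain ⟨s, e, P, hs, he, -, hPP⟩ := hXY
  have hsY (l : Fin n) : s l ∉ Y := fun hsl => by
    obtain ⟨z, hz, hzK⟩ := hmeet l (s l) (hs l) (s l) hsl .nil
    rw [Walk.support_nil, List.mem_singleton] at hz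
    exact disjoint_left.1 (hKY l) hzK (hz ▸ hsl)
  choose x y Q hQ hy hxy using fun l => exists_walk_adj_of_mem (P l) (hsY l) (he l)
  have hQK (l k : Fin n) : ({z | z ∈ (Q l).support} ∩ K k).Nonempty := by
    obtain ⟨z, hz, hzK⟩ := hmeet k (s l) (hs l) (y l) (hy l) ((Q l).concat (hxy l))
    rw [Walk.support_concat, List.mem_append, List.mem_singleton] at hz
    rcases hz with hz | rfl
    · exact ⟨z, hz, hzK⟩
    · exact absurd (hy l) (disjoint_left.1 (hKY k) hzK)
  have hQQ : Pairwise (Function.onFun Disjoint fun l => {z | z ∈ (Q l).support}) :=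
    fun l l' hl => disjoint_left.2 fun z hz hz' => hPP l l' hl z (hQ l z hz).1 (hQ l' z hz').1
  simpa using D.exists_min_card_add_one_le_card_bag
    (fun l => (Q l).connected_induce_support.preconnected) hK hY hYne hQQ hKK
    (fun l => disjoint_left.2 fun z hz => (hQ l z hz).2) hKY hQK
    fun l => ⟨x l, (Q l).end_mem_support, y l, hy l, hxy l⟩

namespace PlaneEmb

variable (emb : PlaneEmb G) {m : ℕ} {cv : Fin m → V} {C : ∀ j, G.Walk (cv j) (cv j)}

/-- The closed walks `C j` form a concentric sequence of cycles of the plane graph. -/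
structure IsConcentric (C : ∀ j, G.Walk (cv j) (cv j)) : Prop where
  isCycle : ∀ j, (C j).IsCycle
  subset_interior : ∀ j : Fin m, ∀ h : (j : ℕ) + 1 < m,
    emb.walkImage (C j) ⊆ interior (discOf (emb.walkImage (C ⟨j + 1, h⟩)))

namespace IsConcentric

variable {emb} {a b k : Fin m} {u v : V}

theorem pos_notMem_discOf (hC : emb.IsConcentric C) (hab : a < b) (hv : v ∈ (C b).support) :
    emb.pos v ∉ discOf (emb.walkImage (C a)) := fun hva =>
  disjoint_left.1 (emb.disjoint_walkImage_interior_discOf (hC.isCycle b))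
    ((emb.pos_mem_walkImage_iff (C b)).2 hv)
    (discOf_subset_interior_discOf_of_lt (fun j => (emb.isCompact_walkImage (C j)).isClosed)
      hC.subset_interior hab hva)

theorem pos_mem_discOf (hC : emb.IsConcentric C) (hab : a ≤ b) (hu : u ∈ (C a).support) :
    emb.pos u ∈ discOf (emb.walkImage (C b)) := by
  have hua := subset_discOf ((emb.pos_mem_walkImage_iff (C a)).2 hu)
  rcases hab.eq_or_lt with rfl | hab
  · exact hua
  · exact interior_subset (discOf_subset_interior_discOf_of_lt
      (fun j => (emb.isCompact_walkImage (C j)).isClosed) hC.subset_interior hab hua)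

theorem pairwise_disjoint_support (hC : emb.IsConcentric C) :
    Pairwise (Function.onFun Disjoint fun j => {x | x ∈ (C j).support}) :=
  (pairwise_disjoint_on _).2 fun _ _ hab => disjoint_left.2 fun _ hxa hxb =>
    hC.pos_notMem_discOf hab hxb (hC.pos_mem_discOf le_rfl hxa)

theorem exists_mem_support (hC : emb.IsConcentric C) (hak : a ≤ k) (hkb : k < b)
    (hu : u ∈ (C a).support) (hv : v ∈ (C b).support) (p : G.Walk u v) :
    ∃ x ∈ p.support, x ∈ (C k).support :=
  emb.exists_mem_support_of_mem_discOf p (C k) (hC.pos_mem_discOf hak hu)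
    (hC.pos_notMem_discOf hkb hv)

theorem exists_add_one_le_card_bag (hC : emb.IsConcentric C) {t : ℕ} (hab : (a : ℕ) + t ≤ b)
    (hpaths : DisjointPathFamily G {x | x ∈ (C a).support} {x | x ∈ (C b).support} t)
    (D : TreeDecomp G) : ∃ x, t + 1 ≤ (D.bag x).card := by
  let κ (k : Fin t) : Fin m := ⟨a + k, by omega⟩
  have hκ : κ.Injective := fun k l hkl => Fin.ext (by simpa [κ] using hkl)
  have haκ (k : Fin t) : a ≤ κ k := Nat.le_add_right _ _
  have hκb (k : Fin t) : κ k < b := Fin.lt_def.2 (by simp only [κ]; omega)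
  exact D.exists_add_one_le_card_bag hpaths (K := fun k => {x | x ∈ (C (κ k)).support})
    (fun k => (C (κ k)).connected_induce_support.preconnected)
    (C b).connected_induce_support.preconnected ⟨_, (C b).start_mem_support⟩
    (hC.pairwise_disjoint_support.comp_of_injective hκ)
    (fun k => hC.pairwise_disjoint_support (hκb k).ne)
    (fun k _ hu _ hv p => hC.exists_mem_support (haκ k) (hκb k) hu hv p)

end IsConcentric

end PlaneEmb

end Concentric

theorem stmt14_general (G : SimpleGraph V) (emb : PlaneEmb G)
    (m : ℕ) (cv : Fin m → V) (C : ∀ j, G.Walk (cv j) (cv j))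
    (hcyc : ∀ j, (C j).IsCycle)
    (hconc : ∀ j : Fin m, ∀ h : (j : ℕ) + 1 < m,
      emb.walkImage (C j) ⊆ interior (discOf (emb.walkImage (C ⟨(j : ℕ) + 1, h⟩))))
    (t : ℕ) (i j : Fin m)
    (hij : (t : ℤ) ≤ |(i : ℤ) - (j : ℤ)|)
    (hpaths : DisjointPathFamily G {x | x ∈ (C i).support} {x | x ∈ (C j).support} t) :
    ∀ D : TreeDecomp G, ∃ b : D.ι, t + 1 ≤ (D.bag b).card := by
  have hC : emb.IsConcentric C := ⟨hcyc, hconc⟩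
  rcases le_abs.1 hij with hji | hij
  · exact hC.exists_add_one_le_card_bag (by omega) hpaths.symm
  · exact hC.exists_add_one_le_card_bag (by omega) hpaths

/-- If a plane graph has a concentric sequence of cycles with `|i − j| ≥ t + 1` and `t`
vertex-disjoint paths between `C_i` and `C_j`, then its treewidth is at least `t`:
every tree decomposition has a bag of size at least `t + 1`. -/
theorem stmt14 (G : SimpleGraph V) (emb : PlaneEmb G)
    (m : ℕ) (cv : Fin m → V) (C : ∀ j, G.Walk (cv j) (cv j))
    (hcyc : ∀ j, (C j).IsCycle)
    (hconc : ∀ j : Fin m, ∀ h : (j : ℕ) + 1 < m,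
      emb.walkImage (C j) ⊆ interior (discOf (emb.walkImage (C ⟨(j : ℕ) + 1, h⟩))))
    (t : ℕ) (i j : Fin m)
    (hij : (t : ℤ) + 1 ≤ |(i : ℤ) - (j : ℤ)|)
    (hpaths : DisjointPathFamily G {x | x ∈ (C i).support} {x | x ∈ (C j).support} t) :
    ∀ D : TreeDecomp G, ∃ b : D.ι, t + 1 ≤ (D.bag b).card :=
  stmt14_general G emb m cv C hcyc hconc t i j ((Int.le_add_one le_rfl).trans hij) hpaths
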